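/- For every n ∈ ℕ there exists a polynomial P_n with nonnegative coefficients such that for all x ∈ ℝ^d and all φ in the Schwartz space S(ℝ^d), |τ_x φ|_n ≤ P_n(|x|) · |φ|_n, where τ_x φ(y) = φ(y − x) and |x| is the Euclidean norm of x. -/

import Mathlib

open MeasureTheory

noncomputable def hermitePoly (n : ℕ) (x : ℝ) : ℝ :=
  (-1 : ℝ) ^ n * Real.exp (x ^ 2 / 2) *
    iteratedDeriv n (fun y : ℝ => Real.exp (-(y ^ 2 / 2))) x

noncomputable def hermiteFun (n : ℕ) (x : ℝ) : ℝ :=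
  (Real.sqrt (Real.sqrt (2 * Real.pi) * n.factorial))⁻¹ *
    Real.exp (-(x ^ 2 / 4)) * hermitePoly n x

noncomputable def hermiteFunMulti (d : ℕ) (α : Fin d → ℕ) (x : EuclideanSpace ℝ (Fin d)) : ℝ :=
  ∏ i, hermiteFun (α i) (x i)

noncomputable def hermCoeff (d : ℕ) (f : EuclideanSpace ℝ (Fin d) → ℝ) (β : Fin d → ℕ) : ℝ :=
  ∫ x, f x * hermiteFunMulti d β x

noncomputable def hermNorm (d n : ℕ) (f : EuclideanSpace ℝ (Fin d) → ℝ) : ℝ :=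
  Real.sqrt (∑' β : Fin d → ℕ,
    (((2 * ∑ i, β i) + d : ℕ) : ℝ) ^ (2 * n) * hermCoeff d f β ^ 2)

/-!
Write `A_i† = x_i / 2 - ∂_i` for the creation operators, `τ` for translation by `x`, and
`N_s(f) = ∑_β (2|β| + d)^s ⟨f, h_β⟩²`, so that `|f|_n² = N_{2n}(f)`. Since `A_i†` maps `h_β` to
`√(β_i + 1) h_{β + e_i}`, the quantities `N_{s+1}(f)` and `∑_i N_s(A_i† f)` are comparable, and
`A_i† τ = τ A_i† + (x_i / 2) τ`. A bound `N_s(τ f) ≤ Q N_s(f)` for all `f` therefore yields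
`N_{s+1}(τ f) ≤ Q (‖x‖² + 4 · 3^s) N_{s+1}(f)`, and the theorem follows by induction on `s`.

The base case is `N_0(τ f) = N_0(f)`. Rather than using completeness of the Hermite functions,
differentiate `N_0` along `t ↦ f(· - t x)`: the derivative is `-2 ∑_β ⟨g, h_β⟩ ⟨∂_x g, h_β⟩` with
`g = f(· - t x)`, and it vanishes because `∂_i` is half the difference of the annihilation and the
creation operator, whose matrices in the Hermite basis are transposes of each other.
-/

open Polynomial in
theorem hermitePoly_eq_aeval (n : ℕ) (x : ℝ) : hermitePoly n x = aeval x (hermite n) := by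
  rw [hermitePoly, hermite_eq_deriv_gaussian', iteratedDeriv_eq_iterate]
  ring

open Polynomial in
theorem derivative_hermite_succ (n : ℕ) :
    derivative (hermite (n + 1)) = ((n : ℤ[X]) + 1) * hermite n := by
  induction n with
  | zero => simp
  | succ n ih =>
    rw [hermite_succ (n + 1), derivative_sub, derivative_mul, derivative_X, ih, derivative_mul,
      hermite_succ n]
    simp only [derivative_add, derivative_natCast, derivative_one, Nat.cast_succ]
    ring

theorem integrable_polynomial_mul_exp_neg_mul_sq {b : ℝ} (hb : 0 < b) (p : Polynomial ℝ) :
    Integrable (fun x : ℝ => p.eval x * Real.exp (-b * x ^ 2)) := by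
  induction p using Polynomial.induction_on' with
  | add p q hp hq =>
    simp only [Polynomial.eval_add, add_mul]
    exact hp.add hq
  | monomial n a =>
    have hn : (-1 : ℝ) < n := by linarith [n.cast_nonneg (α := ℝ)]
    have h := integrable_rpow_mul_exp_neg_mul_sq hb hn
    simp only [Real.rpow_natCast] at h
    simp only [Polynomial.eval_monomial, mul_assoc]
    exact h.const_mul a

/-- The normalizing constant `(√(2π) n!)^(-1/2)` of the Hermite function `h_n`. -/
noncomputable def hermiteConst (n : ℕ) : ℝ := (√(√(2 * Real.pi) * n.factorial))⁻¹

theorem sqrt_mul_hermiteConst_succ (n : ℕ) :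
    √(n + 1 : ℝ) * hermiteConst (n + 1) = hermiteConst n := by
  have hfact : √(2 * Real.pi) * ((n + 1).factorial : ℝ)
      = ((n : ℝ) + 1) * (√(2 * Real.pi) * n.factorial) := by
    rw [Nat.factorial_succ]
    push_cast
    ring
  have hsqrt : √((n : ℝ) + 1) ≠ 0 := by positivity
  rw [hermiteConst, hermiteConst, hfact, Real.sqrt_mul (by positivity)]
  field_simp

theorem hermiteFun_eq (n : ℕ) (x : ℝ) : hermiteFun n x =
    hermiteConst n * Real.exp (-(x ^ 2 / 4)) * Polynomial.aeval x (Polynomial.hermite n) := by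
  rw [hermiteFun, hermitePoly_eq_aeval, hermiteConst]

theorem hermiteFun_zero_sq (x : ℝ) :
    hermiteFun 0 x ^ 2 = (√(2 * Real.pi))⁻¹ * Real.exp (-(1 / 2) * x ^ 2) := by
  have hconst : hermiteConst 0 ^ 2 = (√(2 * Real.pi))⁻¹ := by
    rw [hermiteConst, inv_pow, Real.sq_sqrt (by positivity), Nat.factorial_zero, Nat.cast_one,
      mul_one]
  rw [hermiteFun_eq, Polynomial.hermite_zero, map_one, map_one, mul_one, mul_pow, hconst,
    ← Real.exp_nat_mul]
  congr 2
  push_cast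
  ring

theorem hasDerivAt_hermiteFun (n : ℕ) (x : ℝ) :
    HasDerivAt (hermiteFun n) (hermiteConst n * Real.exp (-(x ^ 2 / 4)) *
      (Polynomial.aeval x (Polynomial.derivative (Polynomial.hermite n))
        - x / 2 * Polynomial.aeval x (Polynomial.hermite n))) x := by
  have hgauss : HasDerivAt (fun x : ℝ => Real.exp (-(x ^ 2 / 4)))
      (Real.exp (-(x ^ 2 / 4)) * (-(x / 2))) x := by
    refine HasDerivAt.exp ((((hasDerivAt_id x).pow 2).div_const 4).neg.congr_deriv ?_)
    simp only [id, Nat.cast_ofNat, Nat.reduceSub, pow_one]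
    ring
  rw [funext (hermiteFun_eq n)]
  refine ((hgauss.const_mul _).mul ((Polynomial.hermite n).hasDerivAt_aeval x)).congr_deriv ?_
  ring

theorem hasDerivAt_hermiteFun_raise (n : ℕ) (x : ℝ) :
    HasDerivAt (hermiteFun n)
      (x / 2 * hermiteFun n x - √(n + 1 : ℝ) * hermiteFun (n + 1) x) x := by
  refine (hasDerivAt_hermiteFun n x).congr_deriv ?_
  rw [hermiteFun_eq, hermiteFun_eq, ← sqrt_mul_hermiteConst_succ n, Polynomial.hermite_succ,
    map_sub, map_mul, Polynomial.aeval_X]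
  ring

theorem hasDerivAt_hermiteFun_lower (n : ℕ) (x : ℝ) :
    HasDerivAt (hermiteFun n) (√(n : ℝ) * hermiteFun (n - 1) x - x / 2 * hermiteFun n x) x := by
  refine (hasDerivAt_hermiteFun n x).congr_deriv ?_
  cases n with
  | zero =>
    simp only [hermiteFun_eq, Polynomial.hermite_zero, map_one, Polynomial.derivative_one, map_zero,
      Nat.cast_zero, Real.sqrt_zero]
    ring
  | succ n =>
    have hsq : √(n + 1 : ℝ) * √(n + 1 : ℝ) = n + 1 := Real.mul_self_sqrt (by positivity)
    rw [hermiteFun_eq, hermiteFun_eq, derivative_hermite_succ, Nat.add_sub_cancel,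
      ← sqrt_mul_hermiteConst_succ n]
    simp only [map_mul, map_add, map_natCast, map_one, Nat.cast_succ]
    linear_combination (-(hermiteConst (n + 1) * Real.exp (-(x ^ 2 / 4)) *
      Polynomial.aeval x (Polynomial.hermite n))) * hsq

theorem continuous_hermiteFun (n : ℕ) : Continuous (hermiteFun n) :=
  continuous_iff_continuousAt.2 fun x => (hasDerivAt_hermiteFun n x).continuousAt

theorem integrable_hermiteFun (n : ℕ) : Integrable (hermiteFun n) := by
  refine ((integrable_polynomial_mul_exp_neg_mul_sq (b := 1 / 4) (by norm_num)
    ((Polynomial.hermite n).map (algebraMap ℤ ℝ))).const_mul (hermiteConst n)).congr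
    (.of_forall fun x => ?_)
  simp only [hermiteFun_eq, Polynomial.eval_map_algebraMap]
  rw [show -(x ^ 2 / 4) = -(1 / 4) * x ^ 2 by ring]
  ring

theorem memLp_two_hermiteFun (n : ℕ) : MemLp (hermiteFun n) 2 := by
  rw [memLp_two_iff_integrable_sq (continuous_hermiteFun n).aestronglyMeasurable]
  refine ((integrable_polynomial_mul_exp_neg_mul_sq (b := 1 / 2) (by norm_num)
    (((Polynomial.hermite n).map (algebraMap ℤ ℝ)) ^ 2)).const_mul (hermiteConst n ^ 2)).congr
    (.of_forall fun x => ?_)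
  simp only [hermiteFun_eq, Polynomial.eval_pow, Polynomial.eval_map_algebraMap]
  rw [show -(1 / 2) * x ^ 2 = -(x ^ 2 / 4) + -(x ^ 2 / 4) by ring, Real.exp_add]
  ring

theorem integrable_hermiteFun_mul (m n : ℕ) :
    Integrable (fun x => hermiteFun m x * hermiteFun n x) :=
  (memLp_two_hermiteFun m).integrable_mul (memLp_two_hermiteFun n)

theorem integral_hermiteFun_zero_mul_self : ∫ x, hermiteFun 0 x * hermiteFun 0 x = 1 := by
  have hpi : √(2 * Real.pi) ≠ 0 := by positivity
  simp_rw [← sq, hermiteFun_zero_sq]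
  rw [integral_const_mul, integral_gaussian, show Real.pi / (1 / 2) = 2 * Real.pi by ring,
    inv_mul_cancel₀ hpi]

-- Integrate `(h_m h_n)'`, with the raising form of `h_m'` and the lowering form of `h_n'`.
theorem sqrt_mul_integral_hermiteFun_succ_mul (m n : ℕ) :
    √(m + 1 : ℝ) * ∫ x, hermiteFun (m + 1) x * hermiteFun n x =
      √(n : ℝ) * ∫ x, hermiteFun m x * hermiteFun (n - 1) x := by
  have hderiv : ∀ x, HasDerivAt (fun x => hermiteFun m x * hermiteFun n x)
      (√(n : ℝ) * (hermiteFun m x * hermiteFun (n - 1) x)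
        - √(m + 1 : ℝ) * (hermiteFun (m + 1) x * hermiteFun n x)) x := fun x =>
    ((hasDerivAt_hermiteFun_raise m x).mul (hasDerivAt_hermiteFun_lower n x)).congr_deriv (by ring)
  have hint_lower := (integrable_hermiteFun_mul m (n - 1)).const_mul √(n : ℝ)
  have hint_raise := (integrable_hermiteFun_mul (m + 1) n).const_mul √(m + 1 : ℝ)
  have hzero := integral_eq_zero_of_hasDerivAt_of_integrable hderiv (hint_lower.sub hint_raise)
    (integrable_hermiteFun_mul m n)
  rw [integral_sub hint_lower hint_raise, integral_const_mul, integral_const_mul] at hzero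
  linarith

theorem integral_hermiteFun_mul (m n : ℕ) :
    ∫ x, hermiteFun m x * hermiteFun n x = if m = n then 1 else 0 := by
  have hsucc_zero (k : ℕ) : ∫ x, hermiteFun (k + 1) x * hermiteFun 0 x = 0 := by
    have h := sqrt_mul_integral_hermiteFun_succ_mul k 0
    rw [Nat.cast_zero, Real.sqrt_zero, zero_mul] at h
    exact (mul_eq_zero.1 h).resolve_left (by positivity)
  induction m generalizing n with
  | zero =>
    cases n with
    | zero => exact integral_hermiteFun_zero_mul_self
    | succ n => simpa [mul_comm] using hsucc_zero n
  | succ m ih =>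
    cases n with
    | zero => exact hsucc_zero m
    | succ n =>
      have h := sqrt_mul_integral_hermiteFun_succ_mul m (n + 1)
      rw [Nat.add_sub_cancel, ih n] at h
      have hm : √((m : ℝ) + 1) ≠ 0 := by positivity
      by_cases hmn : m = n
      · subst hmn
        simpa [hm] using h
      · simpa [hmn, hm] using h

section Multivariate

variable {d : ℕ}

theorem hermiteFunMulti_update (i : Fin d) (β : Fin d → ℕ) (k : ℕ)
    (x : EuclideanSpace ℝ (Fin d)) :
    hermiteFunMulti d (Function.update β i k) x =
      hermiteFun k (x i) * ∏ j ∈ Finset.univ.erase i, hermiteFun (β j) (x j) := by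
  rw [hermiteFunMulti, ← Finset.mul_prod_erase Finset.univ _ (Finset.mem_univ i),
    Function.update_self]
  congr 1
  refine Finset.prod_congr rfl fun j hj => ?_
  rw [Function.update_of_ne (Finset.ne_of_mem_erase hj)]

theorem hermiteFunMulti_eq_mul_prod_erase (i : Fin d) (β : Fin d → ℕ)
    (x : EuclideanSpace ℝ (Fin d)) :
    hermiteFunMulti d β x =
      hermiteFun (β i) (x i) * ∏ j ∈ Finset.univ.erase i, hermiteFun (β j) (x j) := by
  rw [← hermiteFunMulti_update i β (β i) x, Function.update_eq_self]

theorem hermiteFunMulti_add_single (i : Fin d) (β : Fin d → ℕ) (x : EuclideanSpace ℝ (Fin d)) :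
    hermiteFunMulti d (β + Pi.single i 1) x =
      hermiteFun (β i + 1) (x i) * ∏ j ∈ Finset.univ.erase i, hermiteFun (β j) (x j) := by
  rw [← hermiteFunMulti_update i β (β i + 1) x]
  congr 1
  ext j
  rcases eq_or_ne j i with rfl | hj <;> simp [*]

theorem hermiteFunMulti_sub_single (i : Fin d) (β : Fin d → ℕ) (x : EuclideanSpace ℝ (Fin d)) :
    hermiteFunMulti d (β - Pi.single i 1) x =
      hermiteFun (β i - 1) (x i) * ∏ j ∈ Finset.univ.erase i, hermiteFun (β j) (x j) := by
  rw [← hermiteFunMulti_update i β (β i - 1) x]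
  congr 1
  ext j
  rcases eq_or_ne j i with rfl | hj <;> simp [*]

theorem hasLineDerivAt_hermiteFunMulti {i : Fin d} {β : Fin d → ℕ}
    {x : EuclideanSpace ℝ (Fin d)} {h' : ℝ} (hderiv : HasDerivAt (hermiteFun (β i)) h' (x i)) :
    HasLineDerivAt ℝ (hermiteFunMulti d β)
      (h' * ∏ j ∈ Finset.univ.erase i, hermiteFun (β j) (x j)) x (EuclideanSpace.single i 1) := by
  have hslice (t : ℝ) : hermiteFunMulti d β (x + t • EuclideanSpace.single i 1) =
      hermiteFun (β i) (x i + t) * ∏ j ∈ Finset.univ.erase i, hermiteFun (β j) (x j) := by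
    rw [hermiteFunMulti_eq_mul_prod_erase i]
    congr 1
    · simp
    · refine Finset.prod_congr rfl fun j hj => ?_
      simp [Finset.ne_of_mem_erase hj]
  simp only [HasLineDerivAt, hslice]
  refine HasDerivAt.mul_const (HasDerivAt.comp_const_add (x i) 0 ?_) _
  rwa [add_zero]

theorem hasLineDerivAt_hermiteFunMulti_raise (i : Fin d) (β : Fin d → ℕ)
    (x : EuclideanSpace ℝ (Fin d)) :
    HasLineDerivAt ℝ (hermiteFunMulti d β)
      (x i / 2 * hermiteFunMulti d β x
        - √(β i + 1 : ℝ) * hermiteFunMulti d (β + Pi.single i 1) x)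
      x (EuclideanSpace.single i 1) := by
  convert hasLineDerivAt_hermiteFunMulti (hasDerivAt_hermiteFun_raise (β i) (x i)) using 1
  rw [hermiteFunMulti_eq_mul_prod_erase i β x, hermiteFunMulti_add_single]
  ring

theorem hasLineDerivAt_hermiteFunMulti_lower (i : Fin d) (β : Fin d → ℕ)
    (x : EuclideanSpace ℝ (Fin d)) :
    HasLineDerivAt ℝ (hermiteFunMulti d β)
      (√(β i : ℝ) * hermiteFunMulti d (β - Pi.single i 1) x
        - x i / 2 * hermiteFunMulti d β x)
      x (EuclideanSpace.single i 1) := by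
  convert hasLineDerivAt_hermiteFunMulti (hasDerivAt_hermiteFun_lower (β i) (x i)) using 1
  rw [hermiteFunMulti_eq_mul_prod_erase i β x, hermiteFunMulti_sub_single]
  ring

theorem continuous_hermiteFunMulti (β : Fin d → ℕ) : Continuous (hermiteFunMulti d β) :=
  continuous_finsetProd _ fun i _ => (continuous_hermiteFun (β i)).comp (by fun_prop)

theorem integrable_hermiteFunMulti (β : Fin d → ℕ) : Integrable (hermiteFunMulti d β) := by
  rw [← (PiLp.volume_preserving_toLp (Fin d)).integrable_comp_emb
    (MeasurableEquiv.toLp 2 _).measurableEmbedding]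
  exact Integrable.fintype_prod fun i => integrable_hermiteFun (β i)

theorem memLp_two_hermiteFunMulti (β : Fin d → ℕ) : MemLp (hermiteFunMulti d β) 2 := by
  rw [memLp_two_iff_integrable_sq (continuous_hermiteFunMulti β).aestronglyMeasurable,
    ← (PiLp.volume_preserving_toLp (Fin d)).integrable_comp_emb
      (MeasurableEquiv.toLp 2 _).measurableEmbedding]
  refine (Integrable.fintype_prod fun i => (memLp_two_hermiteFun (β i)).integrable_sq).congr
    (.of_forall fun x => ?_)
  exact Finset.prod_pow _ _ _

theorem integral_hermiteFunMulti_mul (α β : Fin d → ℕ) :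
    ∫ x, hermiteFunMulti d α x * hermiteFunMulti d β x = if α = β then 1 else 0 := by
  have hprod : ∫ x : Fin d → ℝ, ∏ i, hermiteFun (α i) (x i) * hermiteFun (β i) (x i) =
      ∏ i, ∫ t, hermiteFun (α i) t * hermiteFun (β i) t :=
    integral_fintype_prod_volume_eq_prod fun i t => hermiteFun (α i) t * hermiteFun (β i) t
  rw [← (PiLp.volume_preserving_toLp (Fin d)).integral_comp
    (MeasurableEquiv.toLp 2 _).measurableEmbedding]
  simp only [hermiteFunMulti, ← Finset.prod_mul_distrib]
  rw [hprod]
  simp only [integral_hermiteFun_mul, Finset.prod_ite_zero, Finset.mem_univ, forall_const,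
    Finset.prod_const_one, funext_iff]

/-- The Hermite function `h_β` as an element of `L²(ℝ^d)`. -/
noncomputable def hermiteLp (β : Fin d → ℕ) :
    Lp ℝ 2 (volume : Measure (EuclideanSpace ℝ (Fin d))) :=
  (memLp_two_hermiteFunMulti β).toLp

theorem orthonormal_hermiteLp : Orthonormal ℝ (hermiteLp (d := d)) := by
  rw [orthonormal_iff_ite]
  intro α β
  rw [L2.inner_def, ← integral_hermiteFunMulti_mul]
  refine integral_congr_ae ?_
  filter_upwards [(memLp_two_hermiteFunMulti α).coeFn_toLp,
    (memLp_two_hermiteFunMulti β).coeFn_toLp] with x hα hβ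
  simp [hermiteLp, hα, hβ, mul_comm]

end Multivariate

open scoped SchwartzMap LineDeriv

section SchwartzGeneral

variable {E F : Type*} [NormedAddCommGroup E] [NormedSpace ℝ E] [NormedAddCommGroup F]
  [NormedSpace ℝ F]

theorem lineDerivOp_compSubConstCLM (v y : E) (f : 𝓢(E, F)) :
    ∂_{v} (f.compSubConstCLM ℝ y) = (∂_{v} f).compSubConstCLM ℝ y := by
  ext z
  rw [SchwartzMap.lineDerivOp_apply_eq_fderiv, SchwartzMap.compSubConstCLM_apply,
    SchwartzMap.lineDerivOp_apply_eq_fderiv]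
  exact DFunLike.congr_fun (fderiv_comp_sub (𝕜 := ℝ) (f := f) y) v

theorem norm_toLp_compSubConstCLM [MeasurableSpace E] [BorelSpace E]
    [SecondCountableTopologyEither E F] (p : ENNReal) (μ : Measure E) [μ.HasTemperateGrowth]
    [μ.IsAddRightInvariant] (y : E) (f : 𝓢(E, F)) :
    ‖(f.compSubConstCLM ℝ y).toLp p μ‖ = ‖f.toLp p μ‖ := by
  rw [SchwartzMap.norm_toLp, SchwartzMap.norm_toLp]
  exact congrArg ENNReal.toReal (eLpNorm_comp_measurePreserving
    f.continuous.aestronglyMeasurable (measurePreserving_sub_right μ y))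

theorem lineDerivOp_eq_sum {ι : Type*} [Fintype ι] [DecidableEq ι] (v : EuclideanSpace ℝ ι)
    (f : 𝓢(EuclideanSpace ℝ ι, F)) :
    ∂_{v} f = ∑ i, v i • ∂_{EuclideanSpace.single i (1 : ℝ)} f := by
  have hv : v = ∑ i, v i • EuclideanSpace.single i (1 : ℝ) := by
    simpa using ((EuclideanSpace.basisFun ι ℝ).sum_repr v).symm
  conv_lhs => rw [hv]
  rw [LineDeriv.lineDerivOp_left_sum]
  exact Finset.sum_congr rfl fun i _ => LineDeriv.lineDerivOp_left_smul _ _ _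

end SchwartzGeneral

section Schwartz

variable {d : ℕ}

/-- The Hermite coefficient `f ↦ ⟨h_β, f⟩` as a continuous linear functional on `𝓢(ℝ^d)`. -/
noncomputable def hermCoeffCLM (β : Fin d → ℕ) : 𝓢(EuclideanSpace ℝ (Fin d), ℝ) →L[ℝ] ℝ :=
  innerSL ℝ (hermiteLp β) ∘L SchwartzMap.toLpCLM ℝ ℝ 2 volume

theorem hermCoeffCLM_eq_inner (β : Fin d → ℕ) (f : 𝓢(EuclideanSpace ℝ (Fin d), ℝ)) :
    hermCoeffCLM β f = inner ℝ (hermiteLp β) (f.toLp 2) := rfl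

theorem hermCoeffCLM_apply (β : Fin d → ℕ) (f : 𝓢(EuclideanSpace ℝ (Fin d), ℝ)) :
    hermCoeffCLM β f = ∫ x, f x * hermiteFunMulti d β x := by
  rw [hermCoeffCLM_eq_inner, L2.inner_def]
  refine integral_congr_ae ?_
  filter_upwards [f.coeFn_toLp 2, (memLp_two_hermiteFunMulti β).coeFn_toLp] with x hf hβ
  simp [hermiteLp, hf, hβ]

theorem integrable_schwartzMap_mul_hermiteFunMulti (f : 𝓢(EuclideanSpace ℝ (Fin d), ℝ))
    (β : Fin d → ℕ) : Integrable (fun x => f x * hermiteFunMulti d β x) :=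
  (f.memLp 2 volume).integrable_mul (memLp_two_hermiteFunMulti β)

theorem summable_hermCoeffCLM_sq (f : 𝓢(EuclideanSpace ℝ (Fin d), ℝ)) :
    Summable (fun β => hermCoeffCLM β f ^ 2) := by
  simpa only [hermCoeffCLM_eq_inner, Real.norm_eq_abs, sq_abs] using
    orthonormal_hermiteLp.inner_products_summable (x := f.toLp 2 volume)

theorem tsum_hermCoeffCLM_sq_le (f : 𝓢(EuclideanSpace ℝ (Fin d), ℝ)) :
    ∑' β, hermCoeffCLM β f ^ 2 ≤ ‖f.toLp 2 volume‖ ^ 2 := by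
  simpa only [hermCoeffCLM_eq_inner, Real.norm_eq_abs, sq_abs] using
    orthonormal_hermiteLp.tsum_inner_products_le (x := f.toLp 2 volume)

theorem summable_hermCoeffCLM_mul (f g : 𝓢(EuclideanSpace ℝ (Fin d), ℝ)) :
    Summable (fun β => hermCoeffCLM β f * hermCoeffCLM β g) :=
  .of_norm_bounded ((summable_hermCoeffCLM_sq f).add (summable_hermCoeffCLM_sq g)) fun β => by
    have hyoung := two_mul_le_add_sq |hermCoeffCLM β f| |hermCoeffCLM β g|
    rw [sq_abs, sq_abs] at hyoung
    rw [Real.norm_eq_abs, abs_mul]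
    linarith [mul_nonneg (abs_nonneg (hermCoeffCLM β f)) (abs_nonneg (hermCoeffCLM β g))]

/-- Multiplication by the `i`-th coordinate. -/
noncomputable def positionCLM (i : Fin d) :
    𝓢(EuclideanSpace ℝ (Fin d), ℝ) →L[ℝ] 𝓢(EuclideanSpace ℝ (Fin d), ℝ) :=
  SchwartzMap.smulLeftCLM ℝ fun x => x i

theorem positionCLM_apply (i : Fin d) (f : 𝓢(EuclideanSpace ℝ (Fin d), ℝ))
    (x : EuclideanSpace ℝ (Fin d)) : positionCLM i f x = x i * f x :=
  SchwartzMap.smulLeftCLM_apply_apply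
    (EuclideanSpace.proj (𝕜 := ℝ) i).hasTemperateGrowth f x

/-- The annihilation operator `x_i / 2 + ∂_i`. -/
noncomputable def annihilationCLM (i : Fin d) :
    𝓢(EuclideanSpace ℝ (Fin d), ℝ) →L[ℝ] 𝓢(EuclideanSpace ℝ (Fin d), ℝ) :=
  (1 / 2 : ℝ) • positionCLM i + LineDeriv.lineDerivOpCLM ℝ _ (EuclideanSpace.single i (1 : ℝ))

/-- The creation operator `x_i / 2 - ∂_i`. -/
noncomputable def creationCLM (i : Fin d) :
    𝓢(EuclideanSpace ℝ (Fin d), ℝ) →L[ℝ] 𝓢(EuclideanSpace ℝ (Fin d), ℝ) :=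
  (1 / 2 : ℝ) • positionCLM i - LineDeriv.lineDerivOpCLM ℝ _ (EuclideanSpace.single i (1 : ℝ))

theorem annihilationCLM_apply (i : Fin d) (f : 𝓢(EuclideanSpace ℝ (Fin d), ℝ)) :
    annihilationCLM i f = (1 / 2 : ℝ) • positionCLM i f + ∂_{EuclideanSpace.single i (1 : ℝ)} f :=
  rfl

theorem creationCLM_apply (i : Fin d) (f : 𝓢(EuclideanSpace ℝ (Fin d), ℝ)) :
    creationCLM i f = (1 / 2 : ℝ) • positionCLM i f - ∂_{EuclideanSpace.single i (1 : ℝ)} f :=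
  rfl

theorem lineDerivOp_single_eq (i : Fin d) (f : 𝓢(EuclideanSpace ℝ (Fin d), ℝ)) :
    ∂_{EuclideanSpace.single i (1 : ℝ)} f =
      (1 / 2 : ℝ) • (annihilationCLM i f - creationCLM i f) := by
  rw [annihilationCLM_apply, creationCLM_apply]
  module

theorem hermCoeffCLM_lineDerivOp_single {i : Fin d} {β γ : Fin d → ℕ} {a b : ℝ}
    (hderiv : ∀ x, HasLineDerivAt ℝ (hermiteFunMulti d β)
      (a * (x i * hermiteFunMulti d β x) + b * hermiteFunMulti d γ x)
      x (EuclideanSpace.single i 1))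
    (f : 𝓢(EuclideanSpace ℝ (Fin d), ℝ)) :
    hermCoeffCLM β (∂_{EuclideanSpace.single i (1 : ℝ)} f) =
      -(a * hermCoeffCLM β (positionCLM i f) + b * hermCoeffCLM γ f) := by
  have hint_position :=
    (integrable_schwartzMap_mul_hermiteFunMulti (positionCLM i f) β).const_mul a
  have hint := (integrable_schwartzMap_mul_hermiteFunMulti f γ).const_mul b
  have hsplit (x : EuclideanSpace ℝ (Fin d)) :
      f x * (a * (x i * hermiteFunMulti d β x) + b * hermiteFunMulti d γ x) =
        a * (positionCLM i f x * hermiteFunMulti d β x) + b * (f x * hermiteFunMulti d γ x) := by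
    rw [positionCLM_apply]
    ring
  have hparts := integral_bilinear_hasLineDerivAt_right_eq_neg_left_of_integrable
    (B := ContinuousLinearMap.mul ℝ ℝ) (μ := volume)
    (integrable_schwartzMap_mul_hermiteFunMulti (∂_{EuclideanSpace.single i (1 : ℝ)} f) β)
    ((hint_position.add hint).congr (.of_forall fun x => (hsplit x).symm))
    (integrable_schwartzMap_mul_hermiteFunMulti f β)
    (fun x _ => (f.hasFDerivAt x).hasLineDerivAt _) (fun x _ => hderiv x)
  simp only [ContinuousLinearMap.mul_apply', hsplit] at hparts
  rw [integral_add hint_position hint, integral_const_mul, integral_const_mul,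
    ← hermCoeffCLM_apply, ← hermCoeffCLM_apply, ← hermCoeffCLM_apply] at hparts
  rw [hparts, neg_neg]

theorem hermCoeffCLM_annihilationCLM (i : Fin d) (β : Fin d → ℕ)
    (f : 𝓢(EuclideanSpace ℝ (Fin d), ℝ)) :
    hermCoeffCLM β (annihilationCLM i f) =
      √(β i + 1 : ℝ) * hermCoeffCLM (β + Pi.single i 1) f := by
  have hderiv := hermCoeffCLM_lineDerivOp_single (i := i) (β := β) (γ := β + Pi.single i 1)
    (a := 1 / 2) (b := -√(β i + 1 : ℝ))
    (fun x => by convert hasLineDerivAt_hermiteFunMulti_raise i β x using 1; ring) f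
  rw [annihilationCLM_apply, map_add, map_smul, hderiv, smul_eq_mul]
  ring

theorem hermCoeffCLM_creationCLM (i : Fin d) (β : Fin d → ℕ)
    (f : 𝓢(EuclideanSpace ℝ (Fin d), ℝ)) :
    hermCoeffCLM β (creationCLM i f) =
      √(β i : ℝ) * hermCoeffCLM (β - Pi.single i 1) f := by
  have hderiv := hermCoeffCLM_lineDerivOp_single (i := i) (β := β) (γ := β - Pi.single i 1)
    (a := -(1 / 2)) (b := √(β i : ℝ))
    (fun x => by convert hasLineDerivAt_hermiteFunMulti_lower i β x using 1; ring) f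
  rw [creationCLM_apply, map_sub, map_smul, hderiv, smul_eq_mul]
  ring

theorem hermCoeffCLM_add_single_creationCLM (i : Fin d) (β : Fin d → ℕ)
    (f : 𝓢(EuclideanSpace ℝ (Fin d), ℝ)) :
    hermCoeffCLM (β + Pi.single i 1) (creationCLM i f) = √(β i + 1 : ℝ) * hermCoeffCLM β f := by
  rw [hermCoeffCLM_creationCLM, add_tsub_cancel_right, Pi.add_apply, Pi.single_eq_same]
  push_cast
  rfl

theorem hermCoeffCLM_creationCLM_eq_zero (i : Fin d) {β : Fin d → ℕ}
    (hβ : β ∉ Set.range fun γ : Fin d → ℕ => γ + Pi.single i 1)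
    (f : 𝓢(EuclideanSpace ℝ (Fin d), ℝ)) : hermCoeffCLM β (creationCLM i f) = 0 := by
  have hzero : β i = 0 := by
    by_contra hne
    refine hβ ⟨β - Pi.single i 1, tsub_add_cancel_of_le fun j => ?_⟩
    rcases eq_or_ne j i with rfl | hj
    · simpa using Nat.one_le_iff_ne_zero.2 hne
    · simp [hj]
  rw [hermCoeffCLM_creationCLM, hzero, Nat.cast_zero, Real.sqrt_zero, zero_mul]

theorem tsum_hermCoeffCLM_mul_creationCLM (i : Fin d) (f g : 𝓢(EuclideanSpace ℝ (Fin d), ℝ)) :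
    ∑' β, hermCoeffCLM β f * hermCoeffCLM β (creationCLM i g) =
      ∑' β, hermCoeffCLM β (annihilationCLM i f) * hermCoeffCLM β g := by
  rw [← (add_left_injective (Pi.single i 1)).tsum_eq]
  · refine tsum_congr fun β => ?_
    rw [hermCoeffCLM_add_single_creationCLM, hermCoeffCLM_annihilationCLM]
    ring
  · refine Function.support_subset_iff'.2 fun β hβ => ?_
    rw [hermCoeffCLM_creationCLM_eq_zero i hβ, mul_zero]

theorem hasSum_hermCoeffCLM_mul_lineDerivOp_single (i : Fin d)
    (f : 𝓢(EuclideanSpace ℝ (Fin d), ℝ)) :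
    HasSum (fun β => hermCoeffCLM β f *
      hermCoeffCLM β (∂_{EuclideanSpace.single i (1 : ℝ)} f)) 0 := by
  have hann := (summable_hermCoeffCLM_mul (annihilationCLM i f) f).hasSum
  have hcre := (summable_hermCoeffCLM_mul f (creationCLM i f)).hasSum
  rw [tsum_hermCoeffCLM_mul_creationCLM] at hcre
  have hdiff := (hann.sub hcre).mul_left (1 / 2)
  rw [sub_self, mul_zero] at hdiff
  refine hdiff.congr_fun fun β => ?_
  rw [lineDerivOp_single_eq, map_smul, map_sub, smul_eq_mul]
  ring

theorem hasSum_hermCoeffCLM_mul_lineDerivOp (v : EuclideanSpace ℝ (Fin d))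
    (f : 𝓢(EuclideanSpace ℝ (Fin d), ℝ)) :
    HasSum (fun β => hermCoeffCLM β f * hermCoeffCLM β (∂_{v} f)) 0 := by
  have hsum := hasSum_sum fun i (_ : i ∈ Finset.univ) =>
    (hasSum_hermCoeffCLM_mul_lineDerivOp_single i f).mul_left (v i)
  simp only [mul_zero, Finset.sum_const_zero] at hsum
  refine hsum.congr_fun fun β => ?_
  rw [lineDerivOp_eq_sum, map_sum, Finset.mul_sum]
  refine Finset.sum_congr rfl fun i _ => ?_
  rw [map_smul, smul_eq_mul]
  ring

end Schwartz

section Translation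

variable {d : ℕ}

theorem creationCLM_compSubConstCLM (i : Fin d) (x : EuclideanSpace ℝ (Fin d))
    (f : 𝓢(EuclideanSpace ℝ (Fin d), ℝ)) :
    creationCLM i (f.compSubConstCLM ℝ x) =
      (creationCLM i f).compSubConstCLM ℝ x + (x i / 2) • f.compSubConstCLM ℝ x := by
  rw [creationCLM_apply, creationCLM_apply, lineDerivOp_compSubConstCLM]
  ext z
  simp only [sub_apply, add_apply, smul_apply, SchwartzMap.compSubConstCLM_apply,
    positionCLM_apply, PiLp.sub_apply, smul_eq_mul]
  ring

theorem hasDerivAt_hermCoeffCLM_translate (β : Fin d → ℕ) (x : EuclideanSpace ℝ (Fin d))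
    (f : 𝓢(EuclideanSpace ℝ (Fin d), ℝ)) (t : ℝ) :
    HasDerivAt (fun t : ℝ => hermCoeffCLM β (f.compSubConstCLM ℝ (t • x)))
      (-hermCoeffCLM β ((∂_{x} f).compSubConstCLM ℝ (t • x))) t := by
  have hpoint (z : EuclideanSpace ℝ (Fin d)) (s : ℝ) :
      HasDerivAt (fun s : ℝ => f.compSubConstCLM ℝ (s • x) z)
        (-(∂_{x} f).compSubConstCLM ℝ (s • x) z) s := by
    have hline : HasDerivAt (fun s : ℝ => z - s • x) (-x) s := by
      simpa using ((hasDerivAt_id s).smul_const x).const_sub z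
    refine ((f.hasFDerivAt (z - s • x)).comp_hasDerivAt s hline).congr_deriv ?_
    rw [map_neg, SchwartzMap.compSubConstCLM_apply, SchwartzMap.lineDerivOp_apply_eq_fderiv]
  have hint (g : 𝓢(EuclideanSpace ℝ (Fin d), ℝ)) :=
    integrable_schwartzMap_mul_hermiteFunMulti g β
  simp only [hermCoeffCLM_apply, ← integral_neg, ← neg_mul]
  refine (hasDerivAt_integral_of_dominated_loc_of_deriv_le (s := Set.univ) Filter.univ_mem
    (.of_forall fun s => (hint _).aestronglyMeasurable) (hint _) ?_
    (.of_forall fun z s _ => ?_)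
    ((integrable_hermiteFunMulti β).norm.const_mul (SchwartzMap.seminorm ℝ 0 0 (∂_{x} f)))
    (.of_forall fun z s _ => (hpoint z s).mul_const _)).2
  · simp only [neg_mul]
    exact (hint _).neg.aestronglyMeasurable
  · rw [norm_mul, norm_neg]
    exact mul_le_mul_of_nonneg_right ((∂_{x} f).norm_le_seminorm ℝ _) (norm_nonneg _)

theorem sum_abs_hermCoeffCLM_mul_le (s : Finset (Fin d → ℕ))
    (f g : 𝓢(EuclideanSpace ℝ (Fin d), ℝ)) :
    ∑ β ∈ s, |2 * hermCoeffCLM β f * hermCoeffCLM β g| ≤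
      ‖f.toLp 2 volume‖ ^ 2 + ‖g.toLp 2 volume‖ ^ 2 :=
  calc ∑ β ∈ s, |2 * hermCoeffCLM β f * hermCoeffCLM β g|
      ≤ ∑ β ∈ s, (hermCoeffCLM β f ^ 2 + hermCoeffCLM β g ^ 2) :=
        Finset.sum_le_sum fun β _ => by
          simpa [abs_mul, sq_abs] using two_mul_le_add_sq |hermCoeffCLM β f| |hermCoeffCLM β g|
    _ = ∑ β ∈ s, hermCoeffCLM β f ^ 2 + ∑ β ∈ s, hermCoeffCLM β g ^ 2 :=
        Finset.sum_add_distrib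
    _ ≤ ∑' β, hermCoeffCLM β f ^ 2 + ∑' β, hermCoeffCLM β g ^ 2 :=
        add_le_add ((summable_hermCoeffCLM_sq f).sum_le_tsum s fun β _ => sq_nonneg _)
          ((summable_hermCoeffCLM_sq g).sum_le_tsum s fun β _ => sq_nonneg _)
    _ ≤ ‖f.toLp 2 volume‖ ^ 2 + ‖g.toLp 2 volume‖ ^ 2 :=
        add_le_add (tsum_hermCoeffCLM_sq_le f) (tsum_hermCoeffCLM_sq_le g)

theorem continuous_hermCoeffCLM_translate (β : Fin d → ℕ) (x : EuclideanSpace ℝ (Fin d))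
    (f : 𝓢(EuclideanSpace ℝ (Fin d), ℝ)) :
    Continuous fun t : ℝ => hermCoeffCLM β (f.compSubConstCLM ℝ (t • x)) :=
  continuous_iff_continuousAt.2 fun t => (hasDerivAt_hermCoeffCLM_translate β x f t).continuousAt

theorem continuous_hermCoeffCLM_translate_mul (β : Fin d → ℕ) (x : EuclideanSpace ℝ (Fin d))
    (f g : 𝓢(EuclideanSpace ℝ (Fin d), ℝ)) :
    Continuous fun t : ℝ => 2 * hermCoeffCLM β (f.compSubConstCLM ℝ (t • x)) *
      hermCoeffCLM β (g.compSubConstCLM ℝ (t • x)) :=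
  (continuous_const.mul (continuous_hermCoeffCLM_translate β x f)).mul
    (continuous_hermCoeffCLM_translate β x g)

theorem hasSum_integral_hermCoeffCLM_translate_mul (x : EuclideanSpace ℝ (Fin d))
    (f : 𝓢(EuclideanSpace ℝ (Fin d), ℝ)) :
    HasSum (fun β => ∫ t in (0 : ℝ)..1, 2 * hermCoeffCLM β (f.compSubConstCLM ℝ (t • x)) *
      hermCoeffCLM β ((∂_{x} f).compSubConstCLM ℝ (t • x))) 0 := by
  have hint (β : Fin d → ℕ) : Integrable (fun t : ℝ =>
      2 * hermCoeffCLM β (f.compSubConstCLM ℝ (t • x)) *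
        hermCoeffCLM β ((∂_{x} f).compSubConstCLM ℝ (t • x)))
      (volume.restrict (Set.Ioc 0 1)) :=
    (continuous_hermCoeffCLM_translate_mul β x f (∂_{x} f)).integrableOn_Ioc
  have hpoint (t : ℝ) : HasSum (fun β => 2 * hermCoeffCLM β (f.compSubConstCLM ℝ (t • x)) *
      hermCoeffCLM β ((∂_{x} f).compSubConstCLM ℝ (t • x))) 0 := by
    simpa only [lineDerivOp_compSubConstCLM, mul_assoc, mul_zero] using
      (hasSum_hermCoeffCLM_mul_lineDerivOp x (f.compSubConstCLM ℝ (t • x))).mul_left 2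
  have hbound (s : Finset (Fin d → ℕ)) :
      ∑ β ∈ s, ∫ t in Set.Ioc (0 : ℝ) 1, ‖2 * hermCoeffCLM β (f.compSubConstCLM ℝ (t • x)) *
        hermCoeffCLM β ((∂_{x} f).compSubConstCLM ℝ (t • x))‖ ≤
      ‖f.toLp 2 volume‖ ^ 2 + ‖(∂_{x} f).toLp 2 volume‖ ^ 2 := by
    have hpoint_le (t : ℝ) := sum_abs_hermCoeffCLM_mul_le s
      (f.compSubConstCLM ℝ (t • x)) ((∂_{x} f).compSubConstCLM ℝ (t • x))
    simp only [norm_toLp_compSubConstCLM, ← Real.norm_eq_abs] at hpoint_le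
    rw [← integral_finsetSum s fun β _ => (hint β).norm]
    refine (integral_mono (integrable_finsetSum s fun β _ => (hint β).norm)
      (integrable_const _) hpoint_le).trans_eq ?_
    simp
  have hsum := hasSum_integral_of_summable_integral_norm hint
    (summable_of_sum_le (fun β => integral_nonneg fun t => norm_nonneg _) hbound)
  simp only [fun t => (hpoint t).tsum_eq, integral_zero] at hsum
  exact hsum.congr_fun fun β => intervalIntegral.integral_of_le zero_le_one

theorem integral_hermCoeffCLM_translate_mul (β : Fin d → ℕ) (x : EuclideanSpace ℝ (Fin d))
    (f : 𝓢(EuclideanSpace ℝ (Fin d), ℝ)) :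
    ∫ t in (0 : ℝ)..1, 2 * hermCoeffCLM β (f.compSubConstCLM ℝ (t • x)) *
        hermCoeffCLM β ((∂_{x} f).compSubConstCLM ℝ (t • x)) =
      hermCoeffCLM β f ^ 2 - hermCoeffCLM β (f.compSubConstCLM ℝ x) ^ 2 := by
  have hderiv (t : ℝ) :
      HasDerivAt (fun t : ℝ => hermCoeffCLM β (f.compSubConstCLM ℝ (t • x)) ^ 2)
        (-(2 * hermCoeffCLM β (f.compSubConstCLM ℝ (t • x)) *
          hermCoeffCLM β ((∂_{x} f).compSubConstCLM ℝ (t • x)))) t :=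
    ((hasDerivAt_hermCoeffCLM_translate β x f t).pow 2).congr_deriv (by push_cast; ring)
  have hftc := intervalIntegral.integral_eq_sub_of_hasDerivAt (a := 0) (b := 1)
    (fun t _ => hderiv t)
    ((continuous_hermCoeffCLM_translate_mul β x f (∂_{x} f)).neg.intervalIntegrable 0 1)
  rw [intervalIntegral.integral_neg, one_smul, zero_smul, SchwartzMap.compSubConstCLM_zero,
    ContinuousLinearMap.id_apply] at hftc
  linarith

theorem tsum_hermCoeffCLM_compSubConstCLM_sq (x : EuclideanSpace ℝ (Fin d))
    (f : 𝓢(EuclideanSpace ℝ (Fin d), ℝ)) :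
    ∑' β, hermCoeffCLM β (f.compSubConstCLM ℝ x) ^ 2 = ∑' β, hermCoeffCLM β f ^ 2 := by
  have hzero := hasSum_integral_hermCoeffCLM_translate_mul x f
  simp only [integral_hermCoeffCLM_translate_mul] at hzero
  have hdiff := (summable_hermCoeffCLM_sq f).hasSum.sub
    (summable_hermCoeffCLM_sq (f.compSubConstCLM ℝ x)).hasSum
  exact (sub_eq_zero.1 (hdiff.unique hzero)).symm

end Translation

section Energy

variable {d : ℕ}

/-- The eigenvalue `2|β| + d` of the harmonic oscillator at the Hermite function `h_β`; powers of
it are the weights of the Hermite norms. -/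
noncomputable def hermEigenvalue (β : Fin d → ℕ) : ℝ := ((2 * ∑ i, β i + d : ℕ) : ℝ)

theorem hermEigenvalue_nonneg (β : Fin d → ℕ) : 0 ≤ hermEigenvalue β := Nat.cast_nonneg _

theorem one_le_hermEigenvalue (i : Fin d) (β : Fin d → ℕ) : 1 ≤ hermEigenvalue β := by
  have hd := i.pos
  exact Nat.one_le_cast.2 (by omega)

theorem hermEigenvalue_add_single (i : Fin d) (β : Fin d → ℕ) :
    hermEigenvalue (β + Pi.single i 1) = hermEigenvalue β + 2 := by
  simp only [hermEigenvalue, Pi.add_apply, Finset.sum_add_distrib, Finset.sum_pi_single',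
    Finset.mem_univ, if_true]
  push_cast
  ring

theorem sum_natCast_add_one (β : Fin d → ℕ) :
    ∑ i, (β i + 1 : ℝ) = ((∑ i, β i + d : ℕ) : ℝ) := by
  simp [Finset.sum_add_distrib]

theorem sum_add_one_le_hermEigenvalue (β : Fin d → ℕ) :
    ∑ i, (β i + 1 : ℝ) ≤ hermEigenvalue β := by
  rw [hermEigenvalue, sum_natCast_add_one]
  exact Nat.cast_le.2 (by omega)

theorem hermEigenvalue_le_two_mul_sum (β : Fin d → ℕ) :
    hermEigenvalue β ≤ 2 * ∑ i, (β i + 1 : ℝ) := by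
  rw [hermEigenvalue, sum_natCast_add_one]
  exact_mod_cast (by omega : 2 * ∑ i, β i + d ≤ 2 * (∑ i, β i + d))

theorem hermEigenvalue_pow_succ_le (s : ℕ) (β : Fin d → ℕ) :
    hermEigenvalue β ^ (s + 1) ≤ 2 * ∑ i, (hermEigenvalue β + 2) ^ s * (β i + 1 : ℝ) := by
  have hnonneg := hermEigenvalue_nonneg β
  calc hermEigenvalue β ^ (s + 1) = hermEigenvalue β ^ s * hermEigenvalue β := pow_succ _ _
    _ ≤ (hermEigenvalue β + 2) ^ s * (2 * ∑ i, (β i + 1 : ℝ)) := by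
        gcongr
        · linarith
        · exact hermEigenvalue_le_two_mul_sum β
    _ = 2 * ∑ i, (hermEigenvalue β + 2) ^ s * (β i + 1 : ℝ) := by
        rw [← Finset.mul_sum]
        ring

theorem sum_hermEigenvalue_add_two_pow_mul_le (s : ℕ) (β : Fin d → ℕ) :
    ∑ i, (hermEigenvalue β + 2) ^ s * (β i + 1 : ℝ) ≤ 3 ^ s * hermEigenvalue β ^ (s + 1) := by
  have hnonneg := hermEigenvalue_nonneg β
  calc ∑ i, (hermEigenvalue β + 2) ^ s * (β i + 1 : ℝ)
      ≤ ∑ i, (3 * hermEigenvalue β) ^ s * (β i + 1 : ℝ) := by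
        gcongr with i
        linarith [one_le_hermEigenvalue i β]
    _ = (3 * hermEigenvalue β) ^ s * ∑ i, (β i + 1 : ℝ) := by rw [Finset.mul_sum]
    _ ≤ (3 * hermEigenvalue β) ^ s * hermEigenvalue β := by
        gcongr
        exact sum_add_one_le_hermEigenvalue β
    _ = 3 ^ s * hermEigenvalue β ^ (s + 1) := by ring

/-- The weighted sum `∑_β (2|β| + d)^s ⟨f, h_β⟩²`; for `s = 2n` it is the square of the Hermite
norm `|f|_n`. Odd exponents are allowed so that induction can proceed by single steps. -/
noncomputable def hermEnergy (s : ℕ) (f : 𝓢(EuclideanSpace ℝ (Fin d), ℝ)) : ℝ :=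
  ∑' β, hermEigenvalue β ^ s * hermCoeffCLM β f ^ 2

theorem hermNorm_eq_sqrt_hermEnergy (n : ℕ) (f : 𝓢(EuclideanSpace ℝ (Fin d), ℝ)) :
    hermNorm d n f = √(hermEnergy (2 * n) f) := by
  simp only [hermNorm, hermCoeff, hermEnergy, hermEigenvalue, hermCoeffCLM_apply]

theorem hermEnergy_nonneg (s : ℕ) (f : 𝓢(EuclideanSpace ℝ (Fin d), ℝ)) : 0 ≤ hermEnergy s f :=
  tsum_nonneg fun β => mul_nonneg (pow_nonneg (hermEigenvalue_nonneg β) s) (sq_nonneg _)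

theorem hermEnergy_zero_compSubConstCLM (x : EuclideanSpace ℝ (Fin d))
    (f : 𝓢(EuclideanSpace ℝ (Fin d), ℝ)) :
    hermEnergy 0 (f.compSubConstCLM ℝ x) = hermEnergy 0 f := by
  simpa only [hermEnergy, pow_zero, one_mul] using tsum_hermCoeffCLM_compSubConstCLM_sq x f

theorem hasSum_hermEnergy_creationCLM {s : ℕ} {i : Fin d}
    {f : 𝓢(EuclideanSpace ℝ (Fin d), ℝ)}
    (hsum : Summable fun β => hermEigenvalue β ^ s * hermCoeffCLM β (creationCLM i f) ^ 2) :
    HasSum (fun β => (hermEigenvalue β + 2) ^ s * (β i + 1 : ℝ) * hermCoeffCLM β f ^ 2)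
      (hermEnergy s (creationCLM i f)) := by
  refine (((add_left_injective (Pi.single i 1)).hasSum_iff fun β hβ => ?_).2
    hsum.hasSum).congr_fun fun β => ?_
  · rw [hermCoeffCLM_creationCLM_eq_zero i hβ, zero_pow two_ne_zero, mul_zero]
  · rw [Function.comp_apply, hermEigenvalue_add_single, hermCoeffCLM_add_single_creationCLM,
      mul_pow, Real.sq_sqrt (by positivity), mul_assoc]

theorem hasSum_sum_hermEnergy_creationCLM {s : ℕ} {f : 𝓢(EuclideanSpace ℝ (Fin d), ℝ)}
    (hsum : ∀ i, Summable fun β =>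
      hermEigenvalue β ^ s * hermCoeffCLM β (creationCLM i f) ^ 2) :
    HasSum (fun β => (∑ i, (hermEigenvalue β + 2) ^ s * (β i + 1 : ℝ)) * hermCoeffCLM β f ^ 2)
      (∑ i, hermEnergy s (creationCLM i f)) :=
  (hasSum_sum fun i _ => hasSum_hermEnergy_creationCLM (hsum i)).congr_fun fun _ =>
    Finset.sum_mul _ _ _

theorem hermEigenvalue_pow_succ_mul_sq_le (s : ℕ) (β : Fin d → ℕ)
    (f : 𝓢(EuclideanSpace ℝ (Fin d), ℝ)) :
    hermEigenvalue β ^ (s + 1) * hermCoeffCLM β f ^ 2 ≤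
      2 * ((∑ i, (hermEigenvalue β + 2) ^ s * (β i + 1 : ℝ)) * hermCoeffCLM β f ^ 2) := by
  rw [← mul_assoc]
  exact mul_le_mul_of_nonneg_right (hermEigenvalue_pow_succ_le s β) (sq_nonneg _)

theorem summable_hermEnergy (s : ℕ) (f : 𝓢(EuclideanSpace ℝ (Fin d), ℝ)) :
    Summable fun β => hermEigenvalue β ^ s * hermCoeffCLM β f ^ 2 := by
  induction s generalizing f with
  | zero => simpa only [pow_zero, one_mul] using summable_hermCoeffCLM_sq f
  | succ s ih =>
    refine .of_nonneg_of_le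
      (fun β => mul_nonneg (pow_nonneg (hermEigenvalue_nonneg β) _) (sq_nonneg _))
      (fun β => hermEigenvalue_pow_succ_mul_sq_le s β f) ?_
    exact (hasSum_sum_hermEnergy_creationCLM fun i => ih (creationCLM i f)).summable.mul_left 2

theorem hermEnergy_succ_le (s : ℕ) (f : 𝓢(EuclideanSpace ℝ (Fin d), ℝ)) :
    hermEnergy (s + 1) f ≤ 2 * ∑ i, hermEnergy s (creationCLM i f) :=
  hasSum_le (fun β => hermEigenvalue_pow_succ_mul_sq_le s β f)
    (summable_hermEnergy (s + 1) f).hasSum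
    ((hasSum_sum_hermEnergy_creationCLM fun i =>
      summable_hermEnergy s (creationCLM i f)).mul_left 2)

theorem sum_hermEnergy_creationCLM_le (s : ℕ) (f : 𝓢(EuclideanSpace ℝ (Fin d), ℝ)) :
    ∑ i, hermEnergy s (creationCLM i f) ≤ 3 ^ s * hermEnergy (s + 1) f := by
  refine hasSum_le (fun β => ?_)
    (hasSum_sum_hermEnergy_creationCLM fun i => summable_hermEnergy s (creationCLM i f))
    ((summable_hermEnergy (s + 1) f).hasSum.mul_left (3 ^ s))
  rw [← mul_assoc]
  exact mul_le_mul_of_nonneg_right (sum_hermEigenvalue_add_two_pow_mul_le s β) (sq_nonneg _)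

theorem hermEnergy_le_succ (i : Fin d) (s : ℕ) (f : 𝓢(EuclideanSpace ℝ (Fin d), ℝ)) :
    hermEnergy s f ≤ hermEnergy (s + 1) f :=
  (summable_hermEnergy s f).tsum_le_tsum
    (fun β => mul_le_mul_of_nonneg_right
      (pow_le_pow_right₀ (one_le_hermEigenvalue i β) s.le_succ) (sq_nonneg _))
    (summable_hermEnergy (s + 1) f)

theorem hermEnergy_smul (s : ℕ) (a : ℝ) (f : 𝓢(EuclideanSpace ℝ (Fin d), ℝ)) :
    hermEnergy s (a • f) = a ^ 2 * hermEnergy s f := by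
  simp only [hermEnergy, map_smul, smul_eq_mul, mul_pow, ← tsum_mul_left]
  exact tsum_congr fun β => mul_left_comm _ _ _

theorem hermEnergy_add_le (s : ℕ) (f g : 𝓢(EuclideanSpace ℝ (Fin d), ℝ)) :
    hermEnergy s (f + g) ≤ 2 * (hermEnergy s f + hermEnergy s g) := by
  refine hasSum_le (fun β => ?_) (summable_hermEnergy s (f + g)).hasSum
    (((summable_hermEnergy s f).hasSum.add (summable_hermEnergy s g).hasSum).mul_left 2)
  rw [map_add, ← mul_add, mul_left_comm]
  exact mul_le_mul_of_nonneg_left add_sq_le (pow_nonneg (hermEigenvalue_nonneg β) s)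

theorem hermEnergy_creationCLM_compSubConstCLM_le (s : ℕ) (i : Fin d)
    (x : EuclideanSpace ℝ (Fin d)) (f : 𝓢(EuclideanSpace ℝ (Fin d), ℝ)) :
    hermEnergy s (creationCLM i (f.compSubConstCLM ℝ x)) ≤
      2 * hermEnergy s ((creationCLM i f).compSubConstCLM ℝ x) +
        x i ^ 2 / 2 * hermEnergy s (f.compSubConstCLM ℝ x) := by
  rw [creationCLM_compSubConstCLM]
  refine (hermEnergy_add_le s _ _).trans_eq ?_
  rw [hermEnergy_smul]
  ring

theorem hermEnergy_succ_compSubConstCLM_le {s : ℕ} {x : EuclideanSpace ℝ (Fin d)} {Q : ℝ}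
    (hQ : 0 ≤ Q) (hbound : ∀ f, hermEnergy s (f.compSubConstCLM ℝ x) ≤ Q * hermEnergy s f)
    (f : 𝓢(EuclideanSpace ℝ (Fin d), ℝ)) :
    hermEnergy (s + 1) (f.compSubConstCLM ℝ x) ≤
      Q * (‖x‖ ^ 2 + 4 * 3 ^ s) * hermEnergy (s + 1) f := by
  have hlower (i : Fin d) :
      hermEnergy s (f.compSubConstCLM ℝ x) ≤ Q * hermEnergy (s + 1) f :=
    (hbound f).trans (mul_le_mul_of_nonneg_left (hermEnergy_le_succ i s f) hQ)
  calc hermEnergy (s + 1) (f.compSubConstCLM ℝ x)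
      ≤ 2 * ∑ i, hermEnergy s (creationCLM i (f.compSubConstCLM ℝ x)) := hermEnergy_succ_le _ _
    _ ≤ 2 * ∑ i, (2 * (Q * hermEnergy s (creationCLM i f)) +
          x i ^ 2 / 2 * (Q * hermEnergy (s + 1) f)) := by
        gcongr with i
        refine (hermEnergy_creationCLM_compSubConstCLM_le s i x f).trans ?_
        gcongr
        · exact hbound _
        · exact hlower i
    _ = 4 * Q * ∑ i, hermEnergy s (creationCLM i f) + Q * hermEnergy (s + 1) f * ‖x‖ ^ 2 := by
        rw [EuclideanSpace.real_norm_sq_eq, Finset.sum_add_distrib, ← Finset.mul_sum,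
          ← Finset.mul_sum, ← Finset.sum_mul, ← Finset.sum_div]
        ring
    _ ≤ 4 * Q * (3 ^ s * hermEnergy (s + 1) f) + Q * hermEnergy (s + 1) f * ‖x‖ ^ 2 := by
        gcongr
        exact sum_hermEnergy_creationCLM_le s f
    _ = Q * (‖x‖ ^ 2 + 4 * 3 ^ s) * hermEnergy (s + 1) f := by ring

theorem sq_add_four_mul_three_pow_le {r : ℝ} (hr : 0 ≤ r) (s : ℕ) :
    r ^ 2 + 4 * 3 ^ s ≤ (r + 2 * 3 ^ (s + 1)) ^ 2 := by
  have hpow : (1 : ℝ) ≤ 3 ^ s := one_le_pow₀ (by norm_num)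
  rw [pow_succ 3 s]
  nlinarith [mul_nonneg hr (zero_le_one.trans hpow)]

theorem hermEnergy_compSubConstCLM_le (s : ℕ) (x : EuclideanSpace ℝ (Fin d))
    (f : 𝓢(EuclideanSpace ℝ (Fin d), ℝ)) :
    hermEnergy s (f.compSubConstCLM ℝ x) ≤ ((‖x‖ + 2 * 3 ^ s) ^ s) ^ 2 * hermEnergy s f := by
  induction s generalizing f with
  | zero => rw [hermEnergy_zero_compSubConstCLM, pow_zero, one_pow, one_mul]
  | succ s ih =>
    have hnonneg := hermEnergy_nonneg (s + 1) f
    calc hermEnergy (s + 1) (f.compSubConstCLM ℝ x)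
        ≤ ((‖x‖ + 2 * 3 ^ s) ^ s) ^ 2 * (‖x‖ ^ 2 + 4 * 3 ^ s) * hermEnergy (s + 1) f :=
          hermEnergy_succ_compSubConstCLM_le (by positivity) ih f
      _ ≤ ((‖x‖ + 2 * 3 ^ (s + 1)) ^ s) ^ 2 * (‖x‖ + 2 * 3 ^ (s + 1)) ^ 2 *
            hermEnergy (s + 1) f := by
          gcongr
          · norm_num
          · exact s.le_succ
          · exact sq_add_four_mul_three_pow_le (norm_nonneg x) s
      _ = ((‖x‖ + 2 * 3 ^ (s + 1)) ^ (s + 1)) ^ 2 * hermEnergy (s + 1) f := by ring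

end Energy

/-- For every `n` there is a polynomial `P_n` with nonnegative coefficients such
that `|τ_x φ|_n ≤ P_n(|x|) |φ|_n` for all `x ∈ ℝ^d` and all Schwartz `φ`,
where `τ_x φ (y) = φ (y - x)`. -/
theorem hermNorm_translate_le (d n : ℕ) :
    ∃ P : Polynomial ℝ, (∀ k, 0 ≤ P.coeff k) ∧
      ∀ (x : EuclideanSpace ℝ (Fin d))
        (φ ψ : SchwartzMap (EuclideanSpace ℝ (Fin d)) ℝ),
        (∀ y, ψ y = φ (y - x)) →
        hermNorm d n (fun z => ψ z) ≤ P.eval ‖x‖ * hermNorm d n (fun z => φ z) := by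
  refine ⟨(Polynomial.X + Polynomial.C (2 * 3 ^ (2 * n))) ^ (2 * n), fun k => ?_,
    fun x φ ψ htranslate => ?_⟩
  · rw [Polynomial.coeff_X_add_C_pow]
    positivity
  · obtain rfl : ψ = φ.compSubConstCLM ℝ x := SchwartzMap.ext htranslate
    rw [Polynomial.eval_pow, Polynomial.eval_add, Polynomial.eval_X, Polynomial.eval_C,
      hermNorm_eq_sqrt_hermEnergy, hermNorm_eq_sqrt_hermEnergy,
      ← Real.sqrt_sq (by positivity : 0 ≤ (‖x‖ + 2 * 3 ^ (2 * n)) ^ (2 * n)),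
      ← Real.sqrt_mul (by positivity)]
    exact Real.sqrt_le_sqrt (hermEnergy_compSubConstCLM_le (2 * n) x φ)
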